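/- arXiv:2406.16599 — 2 statements merged into one kernel-verified Lean document; each statement's English description precedes it below -/
import Mathlib

section
/- Let R be a commutative ring, S a multiplicative set in R, and F a matrix in R[t]^{l×m}. Then the following are equivalent: (1) F(t) is equivalent to F(0) over the localized polynomial ring R_S[t]; (2) there exists b ∈ S such that the matrix F(t + b·x) is equivalent to F(t) over the polynomial ring R[t, x]. -/
/-- Two `l × m` matrices over a commutative ring are equivalent if they differ by
left/right multiplication by square matrices with unit determinant. -/
def MatrixEquiv {B : Type*} [CommRing B] {l m : ℕ}
    (F G : Matrix (Fin l) (Fin m) B) : Prop :=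
  ∃ (U : Matrix (Fin l) (Fin l) B) (V : Matrix (Fin m) (Fin m) B),
    IsUnit U.det ∧ IsUnit V.det ∧ F = U * G * V

/-!
Call a matrix `G` over `A[x]` *extended* if `G ∼ G(0)`. Put `G(x) = F(t + x)`, a matrix over
`R[t][x]` with `G(0) = F(t)` and `G(b x) = F(t + b x)`. Over any base ring, the substitutions
`t ↦ t + x` and `t ↦ 0` show that `F` is extended if and only if `G` is. So everything rests on
the following fact about a localization `B` of a ring `A` at `M`, applied to `A = R[t]`: a matrix
`G` over `A[x]` is extended over `B[x]` if and only if `G(c x)` is extended over `A[x]` for some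
`c ∈ M`.

If `c` is invertible, then `x ↦ c x` can be undone. Conversely, the invertible matrices realizing
an equivalence over `B[x]` may be normalized to be the identity at `x = 0`. Since `x ↦ c x`
multiplies the coefficient of `x ^ n` by `c ^ n`, for sufficiently divisible `c ∈ M` it clears all
their denominators, and a further such substitution turns those identities over `A[x]` that hold
at `x = 0` and over `B[x]` into true ones.
-/

open Polynomial
open Matrix (GeneralLinearGroup)
open scoped MatrixGroups

theorem eq_inv_mul_mul_inv_of_eq_mul_mul {B ι κ : Type*} [CommRing B] [Fintype ι] [DecidableEq ι]
    [Fintype κ] [DecidableEq κ] {F G : Matrix ι κ B} {U : GL ι B} {V : GL κ B}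
    (h : F = U.val * G * V.val) : G = U⁻¹.val * F * V⁻¹.val := by
  rw [h, Matrix.mul_assoc U.val, ← Matrix.mul_assoc, U.inv_mul, Matrix.one_mul, Matrix.mul_assoc,
    V.mul_inv, Matrix.mul_one]

namespace MatrixEquiv

variable {A B : Type*} [CommRing A] [CommRing B] {l m : ℕ}

theorem iff_exists_GL {F G : Matrix (Fin l) (Fin m) B} :
    MatrixEquiv F G ↔ ∃ (U : GL (Fin l) B) (V : GL (Fin m) B), F = U.val * G * V.val := by
  constructor
  · rintro ⟨U, V, hU, hV, h⟩
    obtain ⟨U, rfl⟩ := (Matrix.isUnit_iff_isUnit_det U).mpr hU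
    obtain ⟨V, rfl⟩ := (Matrix.isUnit_iff_isUnit_det V).mpr hV
    exact ⟨U, V, h⟩
  · rintro ⟨U, V, h⟩
    exact ⟨U, V, (Matrix.isUnit_iff_isUnit_det _).mp U.isUnit,
      (Matrix.isUnit_iff_isUnit_det _).mp V.isUnit, h⟩

theorem symm {F G : Matrix (Fin l) (Fin m) B} (h : MatrixEquiv F G) : MatrixEquiv G F := by
  obtain ⟨U, V, hUV⟩ := iff_exists_GL.mp h
  exact iff_exists_GL.mpr ⟨U⁻¹, V⁻¹, eq_inv_mul_mul_inv_of_eq_mul_mul hUV⟩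

theorem trans {F G H : Matrix (Fin l) (Fin m) B} (hFG : MatrixEquiv F G)
    (hGH : MatrixEquiv G H) : MatrixEquiv F H := by
  obtain ⟨U, V, rfl⟩ := iff_exists_GL.mp hFG
  obtain ⟨U', V', rfl⟩ := iff_exists_GL.mp hGH
  exact iff_exists_GL.mpr ⟨U * U', V' * V, by simp only [Units.val_mul, Matrix.mul_assoc]⟩

theorem map {F G : Matrix (Fin l) (Fin m) A} (h : MatrixEquiv F G) (f : A →+* B) :
    MatrixEquiv (F.map f) (G.map f) := by
  obtain ⟨U, V, rfl⟩ := iff_exists_GL.mp h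
  exact iff_exists_GL.mpr
    ⟨GeneralLinearGroup.map f U, GeneralLinearGroup.map f V,
      by rw [Matrix.map_mul, Matrix.map_mul]; rfl⟩

end MatrixEquiv

section IsExtended

variable {A B : Type*} [CommRing A] [CommRing B] {l m : ℕ}

/-- A matrix `G` over `A[x]` is extended from `A` if it is equivalent over `A[x]` to its value
`G(0)` at `x = 0`. The name is that of the corresponding property of `A[x]`-modules. -/
def IsExtended (G : Matrix (Fin l) (Fin m) A[X]) : Prop :=
  MatrixEquiv G ((G.map constantCoeff).map C)

theorem constantCoeff_comp_C : constantCoeff.comp C = RingHom.id A := by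
  ext; simp

theorem map_C_map_constantCoeff {ι κ : Type*} (H : Matrix ι κ A) :
    (H.map C).map constantCoeff = H := by
  rw [Matrix.map_map, ← RingHom.coe_comp, constantCoeff_comp_C]
  exact H.map_id

theorem MatrixEquiv.isExtended {G : Matrix (Fin l) (Fin m) A[X]} {H : Matrix (Fin l) (Fin m) A}
    (h : MatrixEquiv G (H.map C)) : IsExtended G := by
  have h₀ : MatrixEquiv (G.map constantCoeff) H := by
    simpa only [map_C_map_constantCoeff] using h.map constantCoeff
  exact h.trans (h₀.map C).symm

namespace IsExtended

theorem map {G : Matrix (Fin l) (Fin m) A[X]} (hG : IsExtended G) {f : A[X] →+* B[X]}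
    {g : A →+* B} (hfg : f.comp C = C.comp g) : IsExtended (G.map f) := by
  have h : ((G.map constantCoeff).map C).map f = ((G.map constantCoeff).map g).map C := by
    simp only [Matrix.map_map (f := ⇑C), Matrix.map_map (f := ⇑g), ← RingHom.coe_comp, hfg]
  exact MatrixEquiv.isExtended (h ▸ MatrixEquiv.map hG f)

theorem exists_GL_normalized {G : Matrix (Fin l) (Fin m) A[X]} (hG : IsExtended G) :
    ∃ (U : GL (Fin l) A[X]) (V : GL (Fin m) A[X]),
      U.val.map constantCoeff = 1 ∧ V.val.map constantCoeff = 1 ∧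
      G = U.val * (G.map constantCoeff).map C * V.val := by
  obtain ⟨U, V, h⟩ := MatrixEquiv.iff_exists_GL.mp hG
  set G₀ := G.map constantCoeff with hG₀
  set U₀ := GeneralLinearGroup.map constantCoeff U
  set V₀ := GeneralLinearGroup.map constantCoeff V
  have eval_zero : G₀ = U₀.val * G₀ * V₀.val := by
    conv_lhs => rw [hG₀, h, Matrix.map_mul, Matrix.map_mul, map_C_map_constantCoeff]
    rfl
  refine ⟨U * GeneralLinearGroup.map C U₀⁻¹, GeneralLinearGroup.map C V₀⁻¹ * V, ?_, ?_, ?_⟩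
  · calc _ = U₀.val * (U₀⁻¹.val.map C).map constantCoeff := Matrix.map_mul
      _ = 1 := by rw [map_C_map_constantCoeff, U₀.mul_inv]
  · calc _ = (V₀⁻¹.val.map C).map constantCoeff * V₀.val := Matrix.map_mul
      _ = 1 := by rw [map_C_map_constantCoeff, V₀.inv_mul]
  · calc G = U.val * G₀.map C * V.val := h
      _ = U.val * (U₀⁻¹.val * G₀ * V₀⁻¹.val).map C * V.val := by
        rw [← eq_inv_mul_mul_inv_of_eq_mul_mul eval_zero]
      _ = (U * GeneralLinearGroup.map C U₀⁻¹).val * G₀.map C *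
          (GeneralLinearGroup.map C V₀⁻¹ * V).val := by
        simp only [Matrix.map_mul, Units.val_mul, Matrix.mul_assoc]
        rfl

end IsExtended

theorem isExtended_map_mapRingHom_iff (f : A →+* B) (G : Matrix (Fin l) (Fin m) A[X]) :
    IsExtended (G.map (mapRingHom f)) ↔
      MatrixEquiv (G.map (Polynomial.map f)) (G.map fun p => C (f (p.eval 0))) := by
  have h₀ : ((G.map (mapRingHom f)).map constantCoeff).map C =
      G.map fun p => C (f (p.eval 0)) := by
    ext1 i j
    simp [coeff_zero_eq_eval_zero]
  rw [IsExtended, h₀, coe_mapRingHom]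

end IsExtended

section Dilation

variable {A B : Type*} [CommRing A] [CommRing B]

/-- The substitution `x ↦ c * x` on the polynomial ring `A[x]`. -/
noncomputable def dilation (c : A) : A[X] →+* A[X] :=
  compRingHom (C c * X)

@[simp]
theorem dilation_C (c a : A) : dilation c (C a) = C a := C_comp

@[simp]
theorem dilation_X (c : A) : dilation c X = C c * X := X_comp

@[simp]
theorem coeff_dilation (c : A) (p : A[X]) (n : ℕ) :
    (dilation c p).coeff n = p.coeff n * c ^ n :=
  comp_C_mul_X_coeff

theorem dilation_one : dilation (1 : A) = RingHom.id A[X] := by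
  ext <;> simp

theorem dilation_comp_dilation (c d : A) : (dilation d).comp (dilation c) = dilation (c * d) := by
  ext1 <;> simp [RingHom.ext_iff, mul_assoc]

theorem dilation_comp_C (c : A) : (dilation c).comp C = C.comp (RingHom.id A) := by
  ext1; simp

theorem constantCoeff_comp_dilation (c : A) :
    constantCoeff.comp (dilation c) = constantCoeff := by
  ext <;> simp

theorem mapRingHom_comp_dilation (f : A →+* B) (c : A) :
    (mapRingHom f).comp (dilation c) = (dilation (f c)).comp (mapRingHom f) := by
  ext1 <;> simp [RingHom.ext_iff]

section Matrix

variable {ι κ : Type*} (P : Matrix ι κ A[X])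

theorem matrix_map_dilation_map_dilation (c d : A) :
    (P.map (dilation c)).map (dilation d) = P.map (dilation (c * d)) := by
  rw [Matrix.map_map, ← RingHom.coe_comp, dilation_comp_dilation]

theorem matrix_map_dilation_map_constantCoeff (c : A) :
    (P.map (dilation c)).map constantCoeff = P.map constantCoeff := by
  rw [Matrix.map_map, ← RingHom.coe_comp, constantCoeff_comp_dilation]

theorem matrix_map_dilation_map_mapRingHom (f : A →+* B) (c : A) :
    (P.map (dilation c)).map (mapRingHom f) = (P.map (mapRingHom f)).map (dilation (f c)) := by
  simp only [Matrix.map_map, ← RingHom.coe_comp, mapRingHom_comp_dilation]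

theorem matrix_map_C_map_dilation (H : Matrix ι κ A) (c : A) :
    (H.map C).map (dilation c) = H.map C := by
  rw [Matrix.map_map, ← RingHom.coe_comp, dilation_comp_C, RingHom.comp_id]

end Matrix

theorem isExtended_map_dilation_iff {l m : ℕ} (G : Matrix (Fin l) (Fin m) A[X]) {c : A}
    (hc : IsUnit c) : IsExtended (G.map (dilation c)) ↔ IsExtended G := by
  refine ⟨fun h => ?_, fun h => h.map (dilation_comp_C c)⟩
  obtain ⟨d, hcd⟩ := hc.exists_right_inv
  have hG : (G.map (dilation c)).map (dilation d) = G := by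
    rw [matrix_map_dilation_map_dilation, hcd, dilation_one]
    exact G.map_id
  exact hG ▸ h.map (dilation_comp_C d)

end Dilation

section Translation

variable {R R' : Type*} [CommRing R] [CommRing R']

variable (R) in
/-- The substitution `t ↦ t + x` from `R[t]` to `R[t][x]`. -/
noncomputable def translation : R[X] →+* R[X][X] :=
  eval₂RingHom (C.comp C) (C X + X)

@[simp]
theorem translation_C (a : R) : translation R (C a) = C (C a) := by
  simp [translation]

@[simp]
theorem translation_X : translation R X = C X + X := by
  simp [translation]

theorem constantCoeff_comp_translation :
    constantCoeff.comp (translation R) = RingHom.id R[X] := by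
  ext1 <;> simp [RingHom.ext_iff]

theorem mapRingHom_constantCoeff_comp_translation :
    (mapRingHom constantCoeff).comp (translation R) = RingHom.id R[X] := by
  ext1 <;> simp [RingHom.ext_iff]

theorem mapRingHom_mapRingHom_comp_translation (f : R →+* R') :
    (mapRingHom (mapRingHom f)).comp (translation R) = (translation R').comp (mapRingHom f) := by
  ext1 <;> simp [RingHom.ext_iff]

theorem dilation_comp_translation (b : R) :
    (dilation (C b)).comp (translation R) =
      (aeval (C X + C (C b) * X : R[X][X]) : R[X] →ₐ[R] R[X][X]) := by
  ext1 <;> simp [RingHom.ext_iff, Polynomial.algebraMap_apply]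

theorem isExtended_map_translation_iff {l m : ℕ} (F : Matrix (Fin l) (Fin m) R[X]) :
    IsExtended (F.map (translation R)) ↔ IsExtended F := by
  refine ⟨fun h => ?_, fun h => h.map (g := C) (RingHom.ext translation_C)⟩
  have hF : (F.map (translation R)).map (mapRingHom constantCoeff) = F := by
    rw [Matrix.map_map, ← RingHom.coe_comp, mapRingHom_constantCoeff_comp_translation]
    exact F.map_id
  exact hF ▸ h.map (mapRingHom_comp_C constantCoeff)

theorem isExtended_map_translation_map_dilation_iff {l m : ℕ} (F : Matrix (Fin l) (Fin m) R[X])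
    (b : R) :
    IsExtended ((F.map (translation R)).map (dilation (C b))) ↔
      MatrixEquiv (F.map (aeval (C X + C (C b) * X : R[X][X]))) (F.map C) := by
  have hF₀ : (F.map (translation R)).map constantCoeff = F := by
    rw [Matrix.map_map, ← RingHom.coe_comp, constantCoeff_comp_translation]
    exact F.map_id
  rw [IsExtended, matrix_map_dilation_map_constantCoeff, hF₀, Matrix.map_map, ← RingHom.coe_comp,
    dilation_comp_translation]
  rfl

end Translation

section Divisibility

variable {A : Type*} [CommMonoid A] {M : Submonoid A}

variable (M) in
/-- The filter of sufficiently divisible elements: `∀ᶠ c in divisibilityFilter M, P c` says that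
`P` holds for all multiples of some element of `M`. The multiples need not lie in `M`. -/
def divisibilityFilter : Filter A where
  sets := {s | ∃ b ∈ M, ∀ c, b ∣ c → c ∈ s}
  univ_sets := ⟨1, M.one_mem, fun _ _ => trivial⟩
  sets_of_superset := fun ⟨b, hb, h⟩ hst => ⟨b, hb, fun c hc => hst (h c hc)⟩
  inter_sets := fun ⟨b, hb, h⟩ ⟨b', hb', h'⟩ =>
    ⟨b * b', mul_mem hb hb', fun c hc =>
      ⟨h c ((dvd_mul_right b b').trans hc), h' c ((dvd_mul_left b' b).trans hc)⟩⟩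

theorem eventually_dvd_divisibilityFilter {b : A} (hb : b ∈ M) :
    ∀ᶠ c in divisibilityFilter M, b ∣ c :=
  ⟨b, hb, fun _ => id⟩

theorem exists_mem_of_eventually_divisibilityFilter {P : A → Prop}
    (h : ∀ᶠ c in divisibilityFilter M, P c) : ∃ c ∈ M, P c :=
  let ⟨b, hb, hP⟩ := h
  ⟨b, hb, hP b dvd_rfl⟩

theorem eventually_divisibilityFilter_of_mul_left {P : A → Prop} {c : A} (hc : c ∈ M)
    (h : ∀ᶠ d in divisibilityFilter M, P (c * d)) : ∀ᶠ d in divisibilityFilter M, P d := by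
  obtain ⟨b, hb, hP⟩ := h
  refine ⟨c * b, mul_mem hc hb, ?_⟩
  rintro _ ⟨e, rfl⟩
  rw [mul_assoc]
  exact hP _ (dvd_mul_right b e)

end Divisibility

section Localization

variable {A B : Type*} [CommRing A] [CommRing B] [Algebra A B] (M : Submonoid A)
  [IsLocalization M B]

theorem eventually_exists_map_eq_dilation (p : B[X]) (a : A)
    (hp : constantCoeff p = algebraMap A B a) :
    ∀ᶠ c in divisibilityFilter M, ∃ q : A[X], constantCoeff q = a ∧
      mapRingHom (algebraMap A B) q = dilation (algebraMap A B c) p := by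
  obtain ⟨b, hb, hP⟩ := IsLocalization.integerNormalization_spec M p.divX
  set P := IsLocalization.integerNormalization M p.divX
  filter_upwards [eventually_dvd_divisibilityFilter hb]
  rintro _ ⟨d, rfl⟩
  -- `p = a + x * p₁` with `b * p₁ = P`, so `p(b d x) = a + d * x * P(b d x)`.
  refine ⟨C d * dilation (b * d) P * X + C a, by simp, ?_⟩
  have map_dilation_P := RingHom.congr_fun (mapRingHom_comp_dilation (algebraMap A B) (b * d)) P
  simp only [RingHom.comp_apply, coe_mapRingHom, hP] at map_dilation_P
  conv_rhs => rw [← divX_mul_X_add p]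
  rw [constantCoeff_apply] at hp
  simp only [map_add, map_mul, coe_mapRingHom, map_dilation_P, hp, dilation_C, dilation_X, map_C,
    map_X, Algebra.smul_def, Polynomial.algebraMap_apply]
  ring

theorem eventually_dilation_eq_zero (p : A[X]) (h₀ : constantCoeff p = 0)
    (hp : mapRingHom (algebraMap A B) p = 0) :
    ∀ᶠ c in divisibilityFilter M, dilation c p = 0 := by
  have coeff_killed : ∀ n ∈ p.support, ∀ᶠ c in divisibilityFilter M, p.coeff n * c ^ n = 0 := by
    rintro (_ | n) -
    · simp [← constantCoeff_apply, h₀]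
    · have hn : algebraMap A B (p.coeff (n + 1)) = 0 := by
        rw [← coeff_map, ← coe_mapRingHom, hp, coeff_zero]
      obtain ⟨⟨b, hb⟩, hbn⟩ := (IsLocalization.map_eq_zero_iff M B _).mp hn
      filter_upwards [eventually_dvd_divisibilityFilter hb] with c hc
      obtain ⟨e, he⟩ := hc.trans (dvd_pow_self c n.succ_ne_zero)
      calc p.coeff (n + 1) * c ^ (n + 1) = b * p.coeff (n + 1) * e := by rw [he]; ring
        _ = 0 := by rw [hbn, zero_mul]
  filter_upwards [(Filter.eventually_all_finset _).mpr coeff_killed] with c hc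
  ext n
  rw [coeff_dilation, coeff_zero]
  by_cases hn : n ∈ p.support
  · exact hc n hn
  · rw [notMem_support_iff.mp hn, zero_mul]

section Matrix

variable {ι κ : Type*} [Finite ι] [Finite κ]

theorem eventually_exists_matrix_map_eq_dilation (P : Matrix ι κ B[X]) (H : Matrix ι κ A)
    (hP : P.map constantCoeff = H.map (algebraMap A B)) :
    ∀ᶠ c in divisibilityFilter M, ∃ Q : Matrix ι κ A[X], Q.map constantCoeff = H ∧
      Q.map (mapRingHom (algebraMap A B)) = P.map (dilation (algebraMap A B c)) := by
  have lift_entries := Filter.eventually_all.mpr fun i => Filter.eventually_all.mpr fun j =>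
    eventually_exists_map_eq_dilation M (P i j) (H i j) (congrFun₂ hP i j)
  filter_upwards [lift_entries] with c hc
  choose Q hQ₀ hQ using hc
  exact ⟨.of Q, Matrix.ext hQ₀, Matrix.ext hQ⟩

theorem eventually_matrix_map_dilation_eq (P Q : Matrix ι κ A[X])
    (h₀ : P.map constantCoeff = Q.map constantCoeff)
    (h : P.map (mapRingHom (algebraMap A B)) = Q.map (mapRingHom (algebraMap A B))) :
    ∀ᶠ c in divisibilityFilter M, P.map (dilation c) = Q.map (dilation c) := by
  have entries_eq := Filter.eventually_all.mpr fun i => Filter.eventually_all.mpr fun j =>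
    eventually_dilation_eq_zero (B := B) M (P i j - Q i j)
      (by rw [map_sub, sub_eq_zero]; exact congrFun₂ h₀ i j)
      (by rw [map_sub, sub_eq_zero]; exact congrFun₂ h i j)
  filter_upwards [entries_eq] with c hc
  ext1 i j
  exact sub_eq_zero.mp (map_sub (dilation c) _ _ ▸ hc i j)

end Matrix

theorem eventually_exists_GL_map_eq_dilation {ι : Type*} [Fintype ι] [DecidableEq ι]
    (E : GL ι B[X]) (hE : E.val.map constantCoeff = 1) :
    ∀ᶠ c in divisibilityFilter M, ∃ Q : GL ι A[X], Q.val.map constantCoeff = 1 ∧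
      Q.val.map (mapRingHom (algebraMap A B)) = E.val.map (dilation (algebraMap A B c)) := by
  have hE_inv : E⁻¹.val.map constantCoeff = 1 := by
    calc E⁻¹.val.map constantCoeff
        = E.val.map constantCoeff * E⁻¹.val.map constantCoeff := by rw [hE, Matrix.one_mul]
      _ = 1 := by rw [← Matrix.map_mul, E.mul_inv]; simp
  obtain ⟨c, hc, ⟨P, hP₀, hP⟩, ⟨P', hP₀', hP'⟩⟩ :=
    exists_mem_of_eventually_divisibilityFilter <|
      (eventually_exists_matrix_map_eq_dilation M E.val 1 (by simp [hE])).and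
      (eventually_exists_matrix_map_eq_dilation M E⁻¹.val 1 (hE_inv.trans (by simp)))
  refine eventually_divisibilityFilter_of_mul_left hc ?_
  filter_upwards [
    eventually_matrix_map_dilation_eq (B := B) M (P * P') 1
      (by simp [Matrix.map_mul, hP₀, hP₀'])
      (by rw [Matrix.map_mul, hP, hP', ← Matrix.map_mul, E.mul_inv]; simp),
    eventually_matrix_map_dilation_eq (B := B) M (P' * P) 1
      (by simp [Matrix.map_mul, hP₀, hP₀'])
      (by rw [Matrix.map_mul, hP, hP', ← Matrix.map_mul, E.inv_mul]; simp)] with d h h'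
  let Q : GL ι A[X] :=
    ⟨P.map (dilation d), P'.map (dilation d), by rw [← Matrix.map_mul, h]; simp,
      by rw [← Matrix.map_mul, h']; simp⟩
  refine ⟨Q, ?_, ?_⟩
  · rw [matrix_map_dilation_map_constantCoeff, hP₀]
  · rw [matrix_map_dilation_map_mapRingHom, hP, matrix_map_dilation_map_dilation, map_mul]

variable {l m : ℕ} {G : Matrix (Fin l) (Fin m) A[X]}

theorem exists_isExtended_map_dilation
    (hG : IsExtended (G.map (mapRingHom (algebraMap A B)))) :
    ∃ c ∈ M, IsExtended (G.map (dilation c)) := by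
  obtain ⟨U, V, hU, hV, hUV⟩ := hG.exists_GL_normalized
  obtain ⟨c, hc, ⟨U', hU₀', hU'⟩, ⟨V', hV₀', hV'⟩⟩ := exists_mem_of_eventually_divisibilityFilter <|
    (eventually_exists_GL_map_eq_dilation M U hU).and
      (eventually_exists_GL_map_eq_dilation M V hV)
  set G₀ := G.map constantCoeff with hG₀
  have map_G₀ : ((G.map (mapRingHom (algebraMap A B))).map constantCoeff).map C =
      (G₀.map C).map (mapRingHom (algebraMap A B)) := by
    ext1 i j
    simp [hG₀]
  obtain ⟨d, hd, h⟩ := exists_mem_of_eventually_divisibilityFilter <|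
    eventually_matrix_map_dilation_eq (B := B) M (G.map (dilation c))
      (U'.val * G₀.map C * V'.val)
      (by rw [matrix_map_dilation_map_constantCoeff, Matrix.map_mul, Matrix.map_mul, hU₀', hV₀',
        map_C_map_constantCoeff, Matrix.one_mul, Matrix.mul_one])
      (by rw [matrix_map_dilation_map_mapRingHom, hUV, Matrix.map_mul, Matrix.map_mul,
        matrix_map_C_map_dilation, map_G₀, Matrix.map_mul, Matrix.map_mul, hU', hV'])
  rw [matrix_map_dilation_map_dilation] at h
  have hG₀_equiv : MatrixEquiv (U'.val * G₀.map C * V'.val) (G₀.map C) :=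
    MatrixEquiv.iff_exists_GL.mpr ⟨U', V', rfl⟩
  have h_equiv := hG₀_equiv.map (dilation d)
  rw [← h, matrix_map_C_map_dilation] at h_equiv
  exact ⟨c * d, mul_mem hc hd, h_equiv.isExtended⟩

variable (G) in
theorem isExtended_map_algebraMap_iff :
    IsExtended (G.map (mapRingHom (algebraMap A B))) ↔
      ∃ c ∈ M, IsExtended (G.map (dilation c)) := by
  refine ⟨exists_isExtended_map_dilation M, fun ⟨c, hc, h⟩ => ?_⟩
  rw [← isExtended_map_dilation_iff _ (IsLocalization.map_units B ⟨c, hc⟩),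
    ← matrix_map_dilation_map_mapRingHom]
  exact h.map (mapRingHom_comp_C (algebraMap A B))

end Localization

/-- for `F ∈ R[t]^{l×m}` and a multiplicative set `S ⊆ R`,
`F(t) ∼ F(0)` over `R_S[t]` iff there is `b ∈ S` with `F(t + b·x) ∼ F(t)`
over `R[t, x]`.  Here `R[t,x]` is modelled as `Polynomial (Polynomial R)`
(with inner variable `t` and outer variable `x`). -/
theorem stmt0 {R : Type*} [CommRing R] (S : Submonoid R) {l m : ℕ}
    (F : Matrix (Fin l) (Fin m) (Polynomial R)) :
    (MatrixEquiv
        (F.map (Polynomial.map (algebraMap R (Localization S))))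
        (F.map (fun f => Polynomial.C (algebraMap R (Localization S) (f.eval 0))))) ↔
    (∃ b ∈ S, MatrixEquiv
        (F.map (fun f => Polynomial.aeval
          (Polynomial.C Polynomial.X + Polynomial.C (Polynomial.C b) * Polynomial.X :
            Polynomial (Polynomial R)) f))
        (F.map (fun f => (Polynomial.C f : Polynomial (Polynomial R))))) := by
  let φ := algebraMap R (Localization S)
  let := Polynomial.algebra R (Localization S)
  have := Polynomial.isLocalization S (Localization S)
  calc
    _ ↔ IsExtended (F.map (mapRingHom φ)) := (isExtended_map_mapRingHom_iff φ F).symm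
    _ ↔ IsExtended ((F.map (mapRingHom φ)).map (translation (Localization S))) :=
      (isExtended_map_translation_iff _).symm
    _ ↔ IsExtended ((F.map (translation R)).map (mapRingHom (mapRingHom φ))) := by
      simp only [Matrix.map_map, ← RingHom.coe_comp, mapRingHom_mapRingHom_comp_translation]
    _ ↔ ∃ c ∈ S.map C, IsExtended ((F.map (translation R)).map (dilation c)) :=
      isExtended_map_algebraMap_iff (S.map C) (F.map (translation R))
    _ ↔ ∃ b ∈ S, IsExtended ((F.map (translation R)).map (dilation (C b))) := by
      simp only [Submonoid.mem_map, exists_exists_and_eq_and]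
    _ ↔ _ := by
      simp only [isExtended_map_translation_map_dilation_iff]
end

section
/- Let K be a field, A = K[x_1, ..., x_n], and let F ∈ A^{2×2} with det(F) = p, where p ∈ K[x_1] is an irreducible univariate polynomial (viewed in A). If the ideal of A generated by the four entries of F equals A, then F is equivalent to diag(1, p). -/
/-- The image of a univariate polynomial `p ∈ K[x₁]` in `A = K[x₁, …, x_{n+1}]`,
sending the variable to `x₁` (the variable of index `0`). -/
noncomputable def polyImage {K : Type*} [CommRing K] (n : ℕ) (p : Polynomial K) :
    MvPolynomial (Fin (n + 1)) K :=
  Polynomial.aeval (MvPolynomial.X 0) p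

/-!
Modulo `p` the matrix `F` is singular, hence a column times a row, and the column is unimodular
because the entries of `F` generate the unit ideal. If the column lifts to a unimodular column
over `A`, complete the lift to a matrix of determinant one: multiplying `F` by its inverse makes
the second row divisible by `p`, and splitting off `diag(1, p)` leaves a matrix of determinant one.

A unimodular column `(f, g)` over `L[X₁, …, Xₘ]`, where the field `L` is a quotient of a domain
`R`, is lifted to `R[X₁, …, Xₘ]` by induction on `m`. After a shear the leading coefficient of `f`
in `X` is a constant, so the resultant of lifts of `f` and `g` becomes a unit modulo the kernel.
This gives a matrix `M` with first column lifting `(f, g)` and determinant a constant `r` that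
reduces to `1`. Dividing `M(rX) - M(0)` by `rX` and using `det M(0) = r` yields `M(rX) = E M(0)`
with `E` polynomial, and `det E = 1` as both sides have determinant `r`. Since `M(rX)` reduces to
the same matrix as `M`, applying `E` to a lift of `(f(0), g(0))` gives a lift of `(f, g)`.
-/

open Polynomial

section CoprimeLift

variable {B D B' D' : Type*} [CommRing B] [CommRing D] [CommRing B'] [CommRing D']

/-- The pair `(f, g)` is the image under `φ` of a coprime pair. Since coprime pairs are the first
columns of matrices in `SL₂`, this says that the column `(f, g)` lifts to such a matrix. -/
def HasCoprimeLift (φ : B →+* D) (f g : D) : Prop :=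
  ∃ a b : B, IsCoprime a b ∧ φ a = f ∧ φ b = g

theorem HasCoprimeLift.symm {φ : B →+* D} {f g : D} :
    HasCoprimeLift φ f g → HasCoprimeLift φ g f
  | ⟨a, b, hab, ha, hb⟩ => ⟨b, a, hab.symm, hb, ha⟩

theorem HasCoprimeLift.of_isUnit_left {φ : B →+* D} (hφ : Function.Surjective φ) {f : D}
    (hf : IsUnit f) (g : D) : HasCoprimeLift φ f g := by
  obtain ⟨f', hff'⟩ := hf.exists_right_inv
  obtain ⟨a, rfl⟩ := hφ f
  obtain ⟨a', rfl⟩ := hφ f'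
  obtain ⟨b, rfl⟩ := hφ g
  -- The second entry is congruent to `1` modulo `a` and maps to `φ b`.
  refine ⟨a, 1 + (b - 1) * a' * a, ⟨-((b - 1) * a'), 1, by ring⟩, rfl, ?_⟩
  simp only [map_add, map_mul, map_sub, map_one]
  linear_combination (φ b - 1) * hff'

theorem HasCoprimeLift.of_isCoprime_zero_left {φ : B →+* D} (hφ : Function.Surjective φ) {g : D}
    (h : IsCoprime 0 g) : HasCoprimeLift φ 0 g :=
  (of_isUnit_left hφ (isCoprime_zero_left.1 h) 0).symm

theorem HasCoprimeLift.of_ringEquiv {φ : B →+* D} {φ' : B' →+* D'} (e : B ≃+* B') (e' : D ≃+* D')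
    (hcomm : ∀ x, φ' (e x) = e' (φ x)) {f g : D} (h : HasCoprimeLift φ' (e' f) (e' g)) :
    HasCoprimeLift φ f g := by
  obtain ⟨a, b, hab, ha, hb⟩ := h
  refine ⟨e.symm a, e.symm b, hab.map e.symm.toRingHom, e'.injective ?_, e'.injective ?_⟩
  · rw [← hcomm, e.apply_symm_apply, ha]
  · rw [← hcomm, e.apply_symm_apply, hb]

end CoprimeLift

section Univariate

variable {B D : Type*} [CommRing B] [CommRing D]

theorem isUnit_resultant_of_isCoprime {f g : D[X]} (hf : IsUnit f.leadingCoeff)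
    (h : IsCoprime f g) {n : ℕ} (hn : g.natDegree ≤ n) :
    IsUnit (resultant f g f.natDegree n) := by
  obtain ⟨k, rfl⟩ := Nat.exists_eq_add_of_le hn
  obtain ⟨u, hu⟩ := hf
  set f₁ : D[X] := C (↑u⁻¹ : D) * f with hf₁
  have hff₁ : f = C (u : D) * f₁ := by simp [hf₁, ← mul_assoc, ← C_mul]
  have hmonic : f₁.Monic := monic_C_mul_of_mul_leadingCoeff_eq_one (by rw [← hu, u.inv_mul])
  have hdeg : f₁.natDegree = f.natDegree := natDegree_C_mul_of_isUnit u⁻¹.isUnit f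
  have hcop : IsCoprime f₁ g := (isCoprime_mul_unit_left_left (u⁻¹.isUnit.map C) f g).2 h
  rw [resultant_add_right_deg _ _ _ _ _ le_rfl, coeff_natDegree, ← hu, ← hdeg, hff₁,
    resultant_C_mul_left]
  exact (u.isUnit.pow _).mul ((u.isUnit.pow _).mul ((isUnit_resultant_iff_isCoprime hmonic).2 hcop))

theorem exists_det_eq_C_of_isCoprime {φ : B →+* D} (hφ : Function.Surjective φ) {f g : D[X]}
    (hf : IsUnit f.leadingCoeff) (h : IsCoprime f g) :
    ∃ (M : Matrix (Fin 2) (Fin 2) B[X]) (r : B), M.det = C r ∧ φ r = 1 ∧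
      (M 0 0).map φ = f ∧ (M 1 0).map φ = g := by
  obtain ⟨F, rfl, hFdeg⟩ := exists_degree_eq_of_mem_lifts (map_surjective φ hφ f)
  obtain ⟨G, rfl⟩ := map_surjective φ hφ g
  obtain ⟨a, b, -, -, hab⟩ := exists_mul_add_mul_eq_C_resultant F G
    (m := F.natDegree) (n := G.natDegree + 1) le_rfl (Nat.le_succ _) (by simp)
  have hunit := isUnit_resultant_of_isCoprime hf h (natDegree_map_le.trans (Nat.le_succ _))
  rw [natDegree_eq_of_degree_eq hFdeg.symm, resultant_map_map] at hunit
  obtain ⟨s', hs'⟩ := hunit.exists_right_inv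
  obtain ⟨s, rfl⟩ := hφ s'
  refine ⟨!![F, -(C s * b); G, C s * a], resultant F G F.natDegree (G.natDegree + 1) * s, ?_,
    by rw [map_mul, hs'], rfl, rfl⟩
  rw [Matrix.det_fin_two_of, C_mul, ← hab]
  ring

theorem exists_det_eq_one_mul_eval_zero_eq_comp {n : Type*} [Fintype n] [DecidableEq n] {r : B}
    (hr : r ∈ nonZeroDivisors B) {M : Matrix n n B[X]} (hM : M.det = C r) :
    ∃ E : Matrix n n B[X], E.det = 1 ∧
      E * M.map (fun f => C (f.eval 0)) = M.map (·.comp (C r * X)) := by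
  let M₀ := M.map fun f => C (f.eval 0)
  let Q := M.map fun f => f.divX.comp (C r * X)
  have hM₀ : M₀.det = C r := by
    have := (RingHom.map_det (C.comp (evalRingHom (0 : B))) M).symm
    rw [hM] at this
    simpa [M₀, Function.comp_def] using this
  have hMr : (M.map (·.comp (C r * X))).det = C r := by
    have := (RingHom.map_det (compRingHom (C r * X)) M).symm
    simpa [hM] using this
  have hQ : M.map (·.comp (C r * X)) = M₀ + (C r * X) • Q := by
    ext1 i j
    have := congrArg (compRingHom (C r * X)) (divX_mul_X_add (M i j))
    simp only [coe_compRingHom, add_comp, mul_comp, X_comp, C_comp, Matrix.map_apply,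
      ← coeff_zero_eq_eval_zero, Matrix.add_apply, Matrix.smul_apply, smul_eq_mul, M₀, Q] at this ⊢
    linear_combination -this
  have hE : (1 + (X : B[X]) • Q * M₀.adjugate) * M₀ = M.map (·.comp (C r * X)) := by
    rw [hQ, add_mul, one_mul, mul_assoc, Matrix.adjugate_mul, hM₀]
    simp [smul_smul]
  refine ⟨1 + (X : B[X]) • Q * M₀.adjugate, ?_, hE⟩
  have hCr : C r ∈ nonZeroDivisors B[X] :=
    mem_nonZeroDivisors_of_leadingCoeff (by rwa [leadingCoeff_C])
  refine (mul_cancel_right_mem_nonZeroDivisors hCr).1 ?_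
  rw [one_mul, ← hM₀, ← Matrix.det_mul, hE, hMr, hM₀]

theorem HasCoprimeLift.mapRingHom_of_eval_zero [IsDomain B] [Nontrivial D] {φ : B →+* D}
    (hφ : Function.Surjective φ) {f g : D[X]} (hf : IsUnit f.leadingCoeff) (h : IsCoprime f g)
    (h₀ : HasCoprimeLift φ (f.eval 0) (g.eval 0)) : HasCoprimeLift (mapRingHom φ) f g := by
  obtain ⟨M, r, hM, hr, rfl, rfl⟩ := exists_det_eq_C_of_isCoprime hφ hf h
  have hr₀ : r ≠ 0 := by
    rintro rfl
    simp at hr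
  obtain ⟨E, hE, hEM⟩ :=
    exists_det_eq_one_mul_eval_zero_eq_comp (mem_nonZeroDivisors_of_ne_zero hr₀) hM
  obtain ⟨a, b, hab, ha, hb⟩ := h₀
  have hrow (i : Fin 2) : (E i 0 * C a + E i 1 * C b).map φ = (M i 0).map φ := by
    have := congrArg (Polynomial.map φ) (congrFun₂ hEM i 0)
    simpa [Matrix.mul_apply, Fin.sum_univ_two, map_comp, hr, ha, hb] using this
  have hcop : IsCoprime (E 0 0 * C a + E 0 1 * C b) (E 1 0 * C a + E 1 1 * C b) := by
    simpa [Matrix.mulVec, dotProduct, Fin.sum_univ_two] using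
      IsCoprime.mulVecSL (v := ![C a, C b]) (hab.map C) ⟨E, hE⟩
  exact ⟨_, _, hcop, hrow 0, hrow 1⟩

end Univariate

section LeadingCoeff

theorem exists_leadingCoeff_sum_eq {D ι : Type*} [Semiring D] {s : Finset ι} (hs : s.Nonempty)
    {f : ι → D[X]} (hf : ∀ i ∈ s, f i ≠ 0) (hinj : Set.InjOn (fun i => (f i).degree) s) :
    ∃ i ∈ s, (∑ j ∈ s, f j).leadingCoeff = (f i).leadingCoeff := by
  classical
  obtain ⟨i, hi, hmax⟩ := s.exists_max_image (fun i => (f i).degree) hs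
  have hlt : (∑ j ∈ s.erase i, f j).degree < (f i).degree := by
    refine (degree_sum_le _ _).trans_lt ((Finset.sup_lt_iff ?_).2 fun j hj => ?_)
    · exact bot_lt_iff_ne_bot.2 (degree_ne_bot.2 (hf i hi))
    · obtain ⟨hji, hj⟩ := Finset.mem_erase.1 hj
      exact (hmax j hj).lt_of_ne fun h => hji (hinj hj hi h)
  exact ⟨i, hi, by rw [← Finset.sum_erase_add _ _ hi, leadingCoeff_add_of_degree_lt hlt]⟩

theorem exists_leadingCoeff_aeval_eq {S D σ : Type*} [CommRing S] [CommRing D] [Algebra S D]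
    [Fintype σ] (hSD : Function.Injective (algebraMap S D)) {y : σ → D[X]} (hy : ∀ i, (y i).Monic)
    {f : MvPolynomial σ S} (hf : f ≠ 0)
    (hinj : Set.InjOn (fun v : σ →₀ ℕ => ∑ i, v i * (y i).natDegree) f.support) :
    ∃ v ∈ f.support, (MvPolynomial.aeval y f).leadingCoeff = algebraMap S D (f.coeff v) := by
  have hmonic (v : σ →₀ ℕ) : (∏ i, y i ^ v i).Monic :=
    monic_prod_of_monic _ _ fun i _ => (hy i).pow _
  have hcoeff {v} (hv : v ∈ f.support) : algebraMap S D (f.coeff v) ≠ 0 :=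
    (map_ne_zero_iff _ hSD).2 (MvPolynomial.mem_support_iff.1 hv)
  have hlead (v) : (C (algebraMap S D (f.coeff v)) * ∏ i, y i ^ v i).leadingCoeff =
      algebraMap S D (f.coeff v) := by
    rw [leadingCoeff_mul_monic (hmonic v), leadingCoeff_C]
  have hdeg {v} (hv : v ∈ f.support) : (C (algebraMap S D (f.coeff v)) * ∏ i, y i ^ v i).degree =
      (∑ i, v i * (y i).natDegree : ℕ) := by
    have := nontrivial_of_ne _ _ (hcoeff hv)
    rw [(hmonic v).degree_mul, degree_C (hcoeff hv), zero_add,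
      degree_eq_natDegree (hmonic v).ne_zero, natDegree_prod_of_monic _ _ fun i _ => (hy i).pow _]
    simp only [(hy _).natDegree_pow]
  obtain ⟨v, hv, h⟩ := exists_leadingCoeff_sum_eq (MvPolynomial.support_nonempty.2 hf)
    (f := fun v => C (algebraMap S D (f.coeff v)) * ∏ i, y i ^ v i)
    (fun v hv h => hcoeff hv (by rw [← hlead, h, leadingCoeff_zero]))
    (fun v hv w hw h => hinj hv hw (by simpa only [hdeg hv, hdeg hw, Nat.cast_inj] using h))
  exact ⟨v, hv, by
    simpa only [hlead, MvPolynomial.aeval_def, MvPolynomial.eval₂_eq',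
      Polynomial.algebraMap_apply] using h⟩

theorem exists_injOn_sum_mul_pow {m : ℕ} (s : Finset (Fin m →₀ ℕ)) :
    ∃ N ≠ 0, Set.InjOn (fun v : Fin m →₀ ℕ => ∑ i, v i * N ^ (i : ℕ)) s := by
  let P (v : Fin m →₀ ℕ) : ℤ[X] := ofFn m fun i => (v i : ℤ)
  have hP : Function.Injective P := fun v w h =>
    Finsupp.ext fun i => Nat.cast_injective (congrFun (injective_ofFn m h) i)
  have heval (v) (N : ℕ) : (P v).eval (N : ℤ) = (∑ i, v i * N ^ (i : ℕ) : ℕ) := by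
    simp [P, ofFn_eq_sum_monomial, eval_finsetSum]
  have hne (v w) (hvw : v ≠ w) :
      ∀ᶠ N : ℕ in Filter.atTop, (P v).eval (N : ℤ) ≠ (P w).eval (N : ℤ) := by
    rw [← Nat.cofinite_eq_atTop]
    have hfin : {x | (P v - P w).IsRoot x}.Finite :=
      finite_setOfPred_isRoot (sub_ne_zero.2 (hP.ne hvw))
    exact (hfin.preimage Nat.cast_injective.injOn).subset fun N hN => by
      simpa [sub_eq_zero] using hN
  have hall : ∀ᶠ N : ℕ in Filter.atTop, ∀ v ∈ s, ∀ w ∈ s, v ≠ w →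
      (P v).eval (N : ℤ) ≠ (P w).eval (N : ℤ) := by
    simp only [Filter.eventually_all_finset, Filter.eventually_imp_distrib_left]
    exact fun v _ w _ => hne v w
  obtain ⟨N, hN, hN₀⟩ := (hall.and (Filter.eventually_ne_atTop 0)).exists
  refine ⟨N, hN₀, fun v hv w hw h => by_contra fun hvw => hN v hv w hw hvw ?_⟩
  rw [heval, heval]
  exact congrArg _ h

end LeadingCoeff

section Shear

variable (S : Type*) [CommRing S] {n : ℕ} (k : Fin n → ℕ)

/-- The automorphism `X₀ ↦ X₀`, `Xᵢ₊₁ ↦ X₀ ^ k i + Xᵢ₊₁` of `S[X₀, …, Xₙ]`: the change of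
variables of Nagata's proof of Noether normalization. -/
noncomputable def shear : MvPolynomial (Fin (n + 1)) S ≃ₐ[S] MvPolynomial (Fin (n + 1)) S :=
  AlgEquiv.ofAlgHom
    (MvPolynomial.aeval (Fin.cons (.X 0) fun i => .X 0 ^ k i + .X i.succ))
    (MvPolynomial.aeval (Fin.cons (.X 0) fun i => .X i.succ - .X 0 ^ k i))
    (MvPolynomial.algHom_ext (Fin.cases (by simp) (by simp)))
    (MvPolynomial.algHom_ext (Fin.cases (by simp) (by simp)))

/-- The shear, with its values written as univariate polynomials in `X₀`; the exponents `k` are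
chosen so that a given polynomial acquires a constant leading coefficient. -/
noncomputable def shearEquiv :
    MvPolynomial (Fin (n + 1)) S ≃ₐ[S] (MvPolynomial (Fin n) S)[X] :=
  (shear S k).trans (MvPolynomial.finSuccEquiv S n)

theorem shearEquiv_eq_aeval (f : MvPolynomial (Fin (n + 1)) S) :
    shearEquiv S k f =
      MvPolynomial.aeval (Fin.cons X fun i => X ^ k i + C (MvPolynomial.X i)) f := by
  refine DFunLike.congr_fun (f := (shearEquiv S k).toAlgHom) (MvPolynomial.algHom_ext fun i => ?_) f
  refine Fin.cases ?_ (fun i => ?_) i <;>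
    simp [shearEquiv, shear, MvPolynomial.finSuccEquiv_X_zero, MvPolynomial.finSuccEquiv_X_succ]

theorem map_shearEquiv {R S : Type*} [CommRing R] [CommRing S] (q : R →+* S) {n : ℕ}
    (k : Fin n → ℕ) (f : MvPolynomial (Fin (n + 1)) R) :
    (shearEquiv R k f).map (MvPolynomial.map q) = shearEquiv S k (MvPolynomial.map q f) := by
  have hX (i) : (shearEquiv R k (.X i)).map (MvPolynomial.map q) = shearEquiv S k (.X i) := by
    simp only [shearEquiv_eq_aeval, MvPolynomial.aeval_X]
    refine Fin.cases ?_ (fun i => ?_) i <;> simp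
  induction f using MvPolynomial.induction_on with
  | C a => simp [shearEquiv_eq_aeval]
  | add f g hf hg => simp only [map_add, Polynomial.map_add, hf, hg]
  | mul_X f i hf => simp only [map_mul, Polynomial.map_mul, hf, hX, MvPolynomial.map_X]

theorem exists_leadingCoeff_shearEquiv_eq_C {S : Type*} [CommRing S] {n : ℕ}
    {f : MvPolynomial (Fin (n + 1)) S} (hf : f ≠ 0) :
    ∃ (k : Fin n → ℕ) (a : S), a ≠ 0 ∧ (shearEquiv S k f).leadingCoeff = MvPolynomial.C a := by
  have : Nontrivial S := nontrivial_of_ne _ _ (MvPolynomial.ne_zero_iff.1 hf).choose_spec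
  obtain ⟨N, hN, hinj⟩ := exists_injOn_sum_mul_pow f.support
  let y : Fin (n + 1) → (MvPolynomial (Fin n) S)[X] :=
    Fin.cons X fun i => X ^ N ^ (i + 1 : ℕ) + C (MvPolynomial.X i)
  have hy (i) : (y i).Monic :=
    Fin.cases monic_X (fun i => monic_X_pow_add_C _ (pow_ne_zero _ hN)) i
  have hdeg (i) : (y i).natDegree = N ^ (i : ℕ) := by
    refine Fin.cases ?_ (fun i => ?_) i <;> simp [y]
  obtain ⟨v, hv, h⟩ := exists_leadingCoeff_aeval_eq (MvPolynomial.C_injective _ _) hy hf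
    (by simpa only [hdeg] using hinj)
  refine ⟨fun i => N ^ (i + 1 : ℕ), f.coeff v, MvPolynomial.mem_support_iff.1 hv, ?_⟩
  rw [shearEquiv_eq_aeval]
  exact h

end Shear

theorem hasCoprimeLift_mvPolynomial_map {R L : Type*} [CommRing R] [IsDomain R] [Field L]
    {q : R →+* L} (hq : Function.Surjective q) (m : ℕ) {f g : MvPolynomial (Fin m) L}
    (h : IsCoprime f g) : HasCoprimeLift (MvPolynomial.map q) f g := by
  have hmap (m) : Function.Surjective (MvPolynomial.map (σ := Fin m) q) :=
    MvPolynomial.map_surjective q hq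
  induction m with
  | zero =>
    rcases eq_or_ne f 0 with rfl | hf
    · exact .of_isCoprime_zero_left (hmap 0) h
    obtain ⟨a, rfl⟩ := MvPolynomial.C_surjective (Fin 0) f
    have ha : a ≠ 0 := by simpa using hf
    exact .of_isUnit_left (hmap 0) (ha.isUnit.map MvPolynomial.C) g
  | succ m ih =>
    rcases eq_or_ne f 0 with rfl | hf
    · exact .of_isCoprime_zero_left (hmap (m + 1)) h
    obtain ⟨k, a, ha, hlead⟩ := exists_leadingCoeff_shearEquiv_eq_C hf
    have hcop : IsCoprime (shearEquiv L k f) (shearEquiv L k g) :=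
      h.map (shearEquiv L k : MvPolynomial (Fin (m + 1)) L →+* (MvPolynomial (Fin m) L)[X])
    have hunit : IsUnit (shearEquiv L k f).leadingCoeff := hlead ▸ ha.isUnit.map MvPolynomial.C
    refine HasCoprimeLift.of_ringEquiv (φ' := mapRingHom (MvPolynomial.map q))
      (shearEquiv R k).toRingEquiv (shearEquiv L k).toRingEquiv (map_shearEquiv q k) ?_
    exact .mapRingHom_of_eval_zero (hmap m) hunit hcop (ih (hcop.map (evalRingHom 0)))

theorem exists_eq_mul_of_mul_eq_mul {α : Type*} [CommMonoidWithZero α] [IsCancelMulZero α]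
    [DecompositionMonoid α] {a b c d : α} (h : a * d = b * c) :
    ∃ u₁ u₂ v₁ v₂, a = u₁ * v₁ ∧ b = u₁ * v₂ ∧ c = u₂ * v₁ ∧ d = u₂ * v₂ := by
  rcases eq_or_ne a 0 with rfl | ha
  · rw [zero_mul, eq_comm, mul_eq_zero] at h
    rcases h with rfl | rfl
    · exact ⟨0, 1, c, d, by simp⟩
    · exact ⟨b, d, 0, 1, by simp⟩
  · obtain ⟨u₁, v₁, ⟨v₂, rfl⟩, ⟨u₂, rfl⟩, rfl⟩ := exists_dvd_and_dvd_of_dvd_mul (Dvd.intro d h)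
    refine ⟨u₁, u₂, v₁, v₂, rfl, rfl, mul_comm _ _, mul_left_cancel₀ ha ?_⟩
    rw [h]
    ac_rfl

theorem exists_eq_vecMulVec_of_det_eq_zero {D : Type*} [CommRing D] [IsDomain D]
    [DecompositionMonoid D] {M : Matrix (Fin 2) (Fin 2) D} (hM : M.det = 0) :
    ∃ u v, M = Matrix.vecMulVec u v := by
  rw [Matrix.det_fin_two, sub_eq_zero] at hM
  obtain ⟨u₁, u₂, v₁, v₂, h₀₀, h₀₁, h₁₀, h₁₁⟩ := exists_eq_mul_of_mul_eq_mul hM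
  refine ⟨![u₁, u₂], ![v₁, v₂], ?_⟩
  rw [M.eta_fin_two, h₀₀, h₀₁, h₁₀, h₁₁]
  ext i j
  fin_cases i <;> fin_cases j <;> rfl

theorem isCoprime_of_map_eq_vecMulVec {A D n : Type*} [CommRing A] [CommRing D] {π : A →+* D}
    {F : Matrix (Fin 2) n A} (hF : Ideal.span {a | ∃ i j, a = F i j} = ⊤) {u : Fin 2 → D}
    {v : n → D} (huv : F.map π = Matrix.vecMulVec u v) : IsCoprime (u 0) (u 1) := by
  have hle : Ideal.span {a | ∃ i j, a = F i j} ≤ (Ideal.span {u 0, u 1}).comap π := by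
    rw [Ideal.span_le]
    rintro _ ⟨i, j, rfl⟩
    have hij : π (F i j) = u i * v j := congrFun₂ huv i j
    have hi : u i ∈ Ideal.span {u 0, u 1} := Ideal.subset_span (by fin_cases i <;> simp)
    rw [SetLike.mem_coe, Ideal.mem_comap, hij]
    exact Ideal.mul_mem_right _ _ hi
  rw [hF, top_le_iff, Ideal.comap_eq_top_iff, Ideal.eq_top_iff_one, Ideal.mem_span_pair] at hle
  exact hle

section Equivalence

variable {A D : Type*} [CommRing A]

theorem matrixEquiv_diagonal_of_dvd_row {p : A} (hp : p ∈ nonZeroDivisors A)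
    {E F : Matrix (Fin 2) (Fin 2) A} (hE : E.det = 1) (hF : F.det = p)
    (hdvd : ∀ j, p ∣ (E * F) 1 j) : MatrixEquiv F (Matrix.diagonal ![1, p]) := by
  choose w hw using hdvd
  let W : Matrix (Fin 2) (Fin 2) A := .of ![(E * F) 0, w]
  have hEF : E * F = Matrix.diagonal ![1, p] * W := by
    ext i j
    fin_cases i
    · simp [W, Matrix.diagonal_mul]
    · simpa [W, Matrix.diagonal_mul] using hw j
  have hW : W.det = 1 := by
    refine (mul_cancel_left_mem_nonZeroDivisors hp).1 ?_
    have := congrArg Matrix.det hEF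
    simpa [hE, hF] using this.symm
  refine ⟨E.adjugate, W, ?_, by simp [hW], ?_⟩
  · simp [Matrix.det_adjugate, hE]
  · rw [mul_assoc, ← hEF, ← mul_assoc, Matrix.adjugate_mul, hE, one_smul, one_mul]

theorem matrixEquiv_diagonal_of_hasCoprimeLift [CommRing D] [IsDomain D] [DecompositionMonoid D]
    {π : A →+* D} {p : A} (hp : p ∈ nonZeroDivisors A) (hker : ∀ a, p ∣ a ↔ π a = 0)
    (hlift : ∀ f g, IsCoprime f g → HasCoprimeLift π f g) {F : Matrix (Fin 2) (Fin 2) A}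
    (hdet : F.det = p) (hI : Ideal.span {a | ∃ i j, a = F i j} = ⊤) :
    MatrixEquiv F (Matrix.diagonal ![1, p]) := by
  have hdet₀ : (F.map π).det = 0 := by
    rw [← RingHom.mapMatrix_apply, ← RingHom.map_det, hdet, ← hker]
  obtain ⟨u, v, huv⟩ := exists_eq_vecMulVec_of_det_eq_zero hdet₀
  obtain ⟨a, b, ⟨c, d, hcd⟩, ha, hb⟩ := hlift _ _ (isCoprime_of_map_eq_vecMulVec hI huv)
  have hπ (i j) : π (F i j) = u i * v j := congrFun₂ huv i j
  refine matrixEquiv_diagonal_of_dvd_row hp (E := !![c, d; -b, a]) ?_ hdet fun j => ?_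
  · rw [Matrix.det_fin_two_of]
    linear_combination hcd
  · rw [hker]
    simp only [Matrix.mul_apply, Fin.sum_univ_two, Matrix.of_apply, Matrix.cons_val_zero,
      Matrix.cons_val_one, map_add, map_mul, map_neg, hπ, ha, hb]
    ring

end Equivalence

section PolyCoeff

variable (K : Type*) [CommRing K] (n : ℕ)

/-- The identification of `K[x₁, …, xₙ₊₁]` with the polynomials in `x₂, …, xₙ₊₁` over `K[x₁]`. -/
noncomputable def polyCoeffEquiv :
    MvPolynomial (Fin (n + 1)) K ≃ₐ[K] MvPolynomial (Fin n) K[X] :=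
  (MvPolynomial.renameEquiv K (finSuccEquiv n)).trans (MvPolynomial.optionEquivRight K (Fin n))

variable {K}

theorem polyCoeffEquiv_polyImage (p : K[X]) :
    polyCoeffEquiv K n (polyImage n p) = MvPolynomial.C p := by
  have hX : polyCoeffEquiv K n (.X 0) = MvPolynomial.C X := by simp [polyCoeffEquiv]
  rw [polyImage, ← aeval_algHom_apply, hX, ← MvPolynomial.algebraMap_eq, aeval_algebraMap_apply,
    aeval_X_left_apply]

end PolyCoeff

theorem stmt4_general {K : Type*} [CommRing K] [IsDomain K] {n : ℕ} (p : Polynomial K)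
    (hp : (Ideal.span {p}).IsMaximal) (F : Matrix (Fin 2) (Fin 2) (MvPolynomial (Fin (n + 1)) K))
    (hdet : F.det = polyImage n p)
    (hI : Ideal.span {a : MvPolynomial (Fin (n + 1)) K | ∃ i j, a = F i j} = ⊤) :
    MatrixEquiv F (Matrix.diagonal ![1, polyImage n p]) := by
  let := Ideal.Quotient.field (Ideal.span {p})
  have hp₀ : p ≠ 0 := fun h =>
    Ring.ne_bot_of_isMaximal_of_not_isField hp (Polynomial.not_isField K) (by simp [h])
  let q := Ideal.Quotient.mk (Ideal.span {p})
  have hq : Function.Surjective q := Ideal.Quotient.mk_surjective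
  let e := polyCoeffEquiv K n
  have hep : e (polyImage n p) = MvPolynomial.C p := polyCoeffEquiv_polyImage n p
  refine matrixEquiv_diagonal_of_hasCoprimeLift
    (π := (MvPolynomial.map q).comp e.toRingEquiv.toRingHom)
    ?_ (fun a => ?_) (fun f g h => ?_) hdet hI
  · refine mem_nonZeroDivisors_of_ne_zero fun h => hp₀ ?_
    simpa [h] using hep.symm
  · rw [← map_dvd_iff e, hep]
    refine MvPolynomial.C_dvd_iff_map_hom_eq_zero q p (fun r => ?_) _
    rw [Ideal.Quotient.eq_zero_iff_mem, Ideal.mem_span_singleton]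
  · exact .of_ringEquiv e.toRingEquiv (.refl _) (fun _ => rfl)
      (hasCoprimeLift_mvPolynomial_map hq n h)

/-- if `F ∈ A^{2×2}` has `det F = p` with `p ∈ K[x₁]` irreducible,
and the entries of `F` generate the unit ideal (`I₁(F) = A`),
then `F ∼ diag(1, p)`. -/
theorem stmt4 {K : Type*} [Field K] {n : ℕ} (p : Polynomial K) (hp : Irreducible p)
    (F : Matrix (Fin 2) (Fin 2) (MvPolynomial (Fin (n + 1)) K))
    (hdet : F.det = polyImage n p)
    (hI : Ideal.span {a : MvPolynomial (Fin (n + 1)) K | ∃ i j, a = F i j} = ⊤) :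
    MatrixEquiv F (Matrix.diagonal ![1, polyImage n p]) :=
  stmt4_general p (PrincipalIdealRing.isMaximal_of_irreducible hp) F hdet hI
end
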